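/- arXiv:2601.23192 — 2 statements merged into one kernel-verified Lean document; each statement's English description precedes it below -/
import Mathlib

section
/- Let C be a braided monoidal category, let f be a transparent object of C admitting a right dual, and let x be any object of C admitting a right dual. Then, giving f ⊗ x the right dual xᘁ ⊗ fᘁ with the standard composite coevaluation and evaluation, one has η(f ⊗ x) = η(f) ∘ η(x) in End(𝟙). -/
/-!
STATEMENT 2: Let `C` be a braided monoidal category, let `f` be a transparent object of `C`
admitting a right dual, and let `x` be any object of `C` admitting a right dual.  Then,
giving `f ⊗ x` the right dual `xᘁ ⊗ fᘁ` with the standard composite coevaluation and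
evaluation, one has `η(f ⊗ x) = η(f) ∘ η(x)` in `End(𝟙)`.
-/

open CategoryTheory MonoidalCategory

universe v u

variable {C : Type u} [Category.{v} C] [MonoidalCategory C] [BraidedCategory C]

/-- `f` is transparent if `β_{y,f} ∘ β_{f,y} = id_{f ⊗ y}` for every `y`. -/
def Transparent (f : C) : Prop :=
  ∀ y : C, (β_ f y).hom ≫ (β_ y f).hom = 𝟙 (f ⊗ y)

/-- `η(x) := ev_x ∘ β_{x,xᘁ} ∘ coev_x : 𝟙 ⟶ 𝟙`. -/
def eta (x xd : C) (coev : 𝟙_ C ⟶ x ⊗ xd) (ev : xd ⊗ x ⟶ 𝟙_ C) : 𝟙_ C ⟶ 𝟙_ C :=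
  coev ≫ (β_ x xd).hom ≫ ev

/-- The standard composite coevaluation `𝟙 ⟶ (f ⊗ x) ⊗ (xᘁ ⊗ fᘁ)` built from
coevaluations for `f` and `x`. -/
def tensorCoev (f fd x xd : C) (coevf : 𝟙_ C ⟶ f ⊗ fd) (coevx : 𝟙_ C ⟶ x ⊗ xd) :
    𝟙_ C ⟶ (f ⊗ x) ⊗ (xd ⊗ fd) :=
  coevf ≫ (f ◁ ((λ_ fd).inv ≫ (coevx ▷ fd) ≫ (α_ x xd fd).hom)) ≫
    (α_ f x (xd ⊗ fd)).inv

/-- The standard composite evaluation `(xᘁ ⊗ fᘁ) ⊗ (f ⊗ x) ⟶ 𝟙` built from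
evaluations for `f` and `x`. -/
def tensorEv (f fd x xd : C) (evf : fd ⊗ f ⟶ 𝟙_ C) (evx : xd ⊗ x ⟶ 𝟙_ C) :
    (xd ⊗ fd) ⊗ (f ⊗ x) ⟶ 𝟙_ C :=
  (α_ xd fd (f ⊗ x)).hom ≫ (xd ◁ ((α_ fd f x).inv ≫ (evf ▷ x) ≫ (λ_ x).hom)) ≫ evx

theorem aux_insert {f fd w : C} (c : 𝟙_ C ⟶ f ⊗ fd) (g : 𝟙_ C ⟶ w) :
    c ≫ f ◁ ((λ_ fd).inv ≫ g ▷ fd) =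
      g ≫ (ρ_ w).inv ≫ w ◁ c ≫ (α_ w f fd).inv ≫ (β_ w f).hom ▷ fd ≫ (α_ f w fd).hom := by
  have h1 : g ≫ (ρ_ w).inv ≫ w ◁ c = c ≫ (λ_ _).inv ≫ g ▷ (f ⊗ fd) := by
    rw [rightUnitor_inv_naturality_assoc, leftUnitor_inv_naturality_assoc, whisker_exchange,
      unitors_inv_equal]
  have h2 : g ▷ (f ⊗ fd) ≫ (α_ w f fd).inv ≫ (β_ w f).hom ▷ fd =
      (α_ _ f fd).inv ≫ (β_ (𝟙_ C) f).hom ▷ fd ≫ (f ◁ g) ▷ fd := by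
    rw [← comp_whiskerRight, ← BraidedCategory.braiding_naturality_left]
    monoidal
  calc _ = c ≫ (λ_ _).inv ≫ ((α_ _ f fd).inv ≫ (β_ (𝟙_ C) f).hom ▷ fd ≫ (f ◁ g) ▷ fd) ≫
        (α_ f w fd).hom := by
        simp
    _ = _ := by
        rw [← h2]
        have := congrArg (fun t => t ≫ (α_ w f fd).inv ≫ (β_ w f).hom ▷ fd ≫ (α_ f w fd).hom) h1
        simpa only [Category.assoc] using this.symm

theorem aux_pass {f fd x : C} (c : 𝟙_ C ⟶ f ⊗ fd) :
    (ρ_ x).inv ≫ x ◁ c ≫ (α_ x f fd).inv ≫ (β_ x f).hom ▷ fd ≫ (α_ f x fd).hom ≫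
      f ◁ (β_ x fd).hom = (λ_ x).inv ≫ c ▷ x ≫ (α_ f fd x).hom := by
  have h := BraidedCategory.braiding_naturality_right x c
  rw [BraidedCategory.braiding_tensor_right_hom] at h
  rw [← cancel_mono (α_ f fd x).inv]
  simp only [Category.assoc, h, Iso.hom_inv_id, Category.comp_id]
  rw [rightUnitor_inv_braiding_assoc]

theorem aux_key {f fd x xd : C} (c : 𝟙_ C ⟶ f ⊗ fd) (g : 𝟙_ C ⟶ xd ⊗ x)
    (h : (β_ xd f).hom ≫ (β_ f xd).hom = 𝟙 _) :
    (c ≫ f ◁ ((λ_ fd).inv ≫ g ▷ fd)) ⊗≫ f ◁ xd ◁ (β_ x fd).hom ⊗≫ (β_ f xd).hom ▷ (fd ⊗ x) =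
      g ⊗≫ xd ◁ ((λ_ x).inv ≫ c ▷ x ≫ (α_ f fd x).hom) ⊗≫ 𝟙 _ := by
  rw [aux_insert, BraidedCategory.braiding_tensor_left_hom]
  calc _ = g ⊗≫ xd ◁ x ◁ c ⊗≫ xd ◁ (β_ x f).hom ▷ fd ⊗≫
        ((β_ xd f).hom ▷ (x ⊗ fd) ≫ (f ⊗ xd) ◁ (β_ x fd).hom) ⊗≫
        (β_ f xd).hom ▷ (fd ⊗ x) := by monoidal
    _ = g ⊗≫ xd ◁ x ◁ c ⊗≫ xd ◁ (β_ x f).hom ▷ fd ⊗≫ xd ◁ f ◁ (β_ x fd).hom ⊗≫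
        ((β_ xd f).hom ≫ (β_ f xd).hom) ▷ (fd ⊗ x) := by
        rw [← whisker_exchange]; monoidal
    _ = g ⊗≫ xd ◁ ((ρ_ x).inv ≫ x ◁ c ≫ (α_ x f fd).inv ≫ (β_ x f).hom ▷ fd ≫ (α_ f x fd).hom ≫
      f ◁ (β_ x fd).hom) ⊗≫ 𝟙 _ := by
        rw [h]; monoidal
    _ = _ := by rw [aux_pass]

theorem aux_scalar {w : C} (s : 𝟙_ C ⟶ 𝟙_ C) (g : 𝟙_ C ⟶ w) :
    g ≫ (λ_ w).inv ≫ s ▷ w ≫ (λ_ w).hom = s ≫ g := by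
  rw [leftUnitor_inv_naturality_assoc, whisker_exchange_assoc, leftUnitor_naturality]
  rw [unitors_inv_equal, ← rightUnitor_inv_naturality_assoc, unitors_equal]
  simp

theorem aux_scalar' {x y : C} (s : 𝟙_ C ⟶ 𝟙_ C) :
    y ◁ ((λ_ x).inv ≫ s ▷ x ≫ (λ_ x).hom) = (λ_ _).inv ≫ s ▷ (y ⊗ x) ≫ (λ_ _).hom := by
  have h : (λ_ y).inv ≫ s ▷ y ≫ (λ_ y).hom = (ρ_ y).inv ≫ y ◁ s ≫ (ρ_ y).hom := by
    have := BraidedCategory.braiding_naturality_left s y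
    rw [← cancel_mono (ρ_ y).inv]
    simp only [Category.assoc, Iso.hom_inv_id, Category.comp_id]
    rw [← leftUnitor_inv_braiding, Category.assoc, ← this]
    simp
  calc _ = ((ρ_ y).inv ≫ y ◁ s ≫ (ρ_ y).hom) ▷ x := by monoidal
    _ = ((λ_ y).inv ≫ s ▷ y ≫ (λ_ y).hom) ▷ x := by rw [h]
    _ = _ := by monoidal

theorem eta_tensor_transparent
    (f fd x xd : C) (p : ExactPairing f fd) (q : ExactPairing x xd)
    (hf : Transparent f) :
    eta (f ⊗ x) (xd ⊗ fd)
        (tensorCoev f fd x xd p.coevaluation' q.coevaluation')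
        (tensorEv f fd x xd p.evaluation' q.evaluation') =
      eta f fd p.coevaluation' p.evaluation' ≫
        eta x xd q.coevaluation' q.evaluation' := by
  have h : (β_ xd f).hom ≫ (β_ f xd).hom = 𝟙 _ := by
    rw [← cancel_epi (β_ f xd).hom, ← Category.assoc, hf xd]; simp
  generalize p.coevaluation' = c
  generalize p.evaluation' = e
  generalize q.coevaluation' = c'
  generalize q.evaluation' = e'
  have key := aux_key c (c' ≫ (β_ x xd).hom) h
  unfold eta tensorCoev tensorEv
  rw [BraidedCategory.braiding_tensor_left_hom, BraidedCategory.braiding_tensor_right_hom,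
    BraidedCategory.braiding_tensor_right_hom]
  calc _ = ((c ≫ f ◁ ((λ_ fd).inv ≫ (c' ≫ (β_ x xd).hom) ▷ fd)) ⊗≫ f ◁ xd ◁ (β_ x fd).hom ⊗≫
        (β_ f xd).hom ▷ (fd ⊗ x)) ⊗≫ xd ◁ ((β_ f fd).hom ≫ e) ▷ x ⊗≫ e' := by monoidal
    _ = (c' ≫ (β_ x xd).hom) ≫
        xd ◁ ((λ_ x).inv ≫ (c ≫ (β_ f fd).hom ≫ e) ▷ x ≫ (λ_ x).hom) ≫ e' := by
        rw [key]; monoidal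
    _ = _ := by
        rw [aux_scalar']
        have := aux_scalar (c ≫ (β_ f fd).hom ≫ e) (c' ≫ (β_ x xd).hom)
        have := congrArg (· ≫ e') this
        simpa only [Category.assoc] using this
end

section
/- Let k be a field of characteristic different from 2 and let C be a k-linear braided monoidal category. Suppose f is a transparent object of C admitting a right dual with η(f) = −id_𝟙, and x is an object of C admitting a right dual such that f ⊗ x ≅ x. Then η(x) = 0 in End(𝟙). -/
/-!
STATEMENT 4: Let `k` be a field of characteristic different from `2` and let `C` be a
`k`-linear braided monoidal category.  Suppose `f` is a transparent object of `C` admitting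
a right dual with `η(f) = −id_𝟙`, and `x` is an object of `C` admitting a right dual such
that `f ⊗ x ≅ x`.  Then `η(x) = 0` in `End(𝟙)`.
-/

open CategoryTheory MonoidalCategory

universe v u

variable {C : Type u} [Category.{v} C] [MonoidalCategory C] [BraidedCategory C]

theorem eta_iso_aux {x xd y yd : C} (q : ExactPairing x xd) (r : ExactPairing y yd)
    (e : x ≅ y) : eta x xd q.coevaluation' q.evaluation' =
      eta y yd r.coevaluation' r.evaluation' := by
  let : HasRightDual x := ⟨xd⟩
  let : HasRightDual y := ⟨yd⟩
  have h1 := coevaluation_comp_rightAdjointMate e.hom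
  have h2 := rightAdjointMate_comp_evaluation e.hom
  generalize (rightAdjointMate e.hom) = d at h1 h2
  change (r.coevaluation' ≫ y ◁ d = q.coevaluation' ≫ e.hom ▷ xd) at h1
  change (d ▷ x ≫ q.evaluation' = yd ◁ e.hom ≫ r.evaluation') at h2
  change yd ⟶ xd at d
  unfold eta
  symm
  calc r.coevaluation' ≫ (β_ y yd).hom ≫ r.evaluation'
      = r.coevaluation' ≫ (β_ y yd).hom ≫ yd ◁ e.inv ≫ yd ◁ e.hom ≫ r.evaluation' := by
        simp
    _ = (r.coevaluation' ≫ y ◁ d) ≫ e.inv ▷ xd ≫ (β_ x xd).hom ≫ q.evaluation' := by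
        rw [← h2, ← BraidedCategory.braiding_naturality_left_assoc,
          ← BraidedCategory.braiding_naturality_right_assoc, Category.assoc,
          whisker_exchange_assoc]
        rfl
    _ = _ := by
        rw [h1]; simp

theorem eta_tensor_aux {f fd x xd : C} (p : ExactPairing f fd) (q : ExactPairing x xd)
    (hf : Transparent f) :
    eta (f ⊗ x) (xd ⊗ fd) (@ExactPairing.tensor _ _ _ _ _ _ _ p q).coevaluation'
      (@ExactPairing.tensor _ _ _ _ _ _ _ p q).evaluation' =
    q.coevaluation' ≫ (β_ x xd).hom ≫ (ρ_ _).inv ≫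
      (xd ⊗ x) ◁ (eta f fd p.coevaluation' p.evaluation') ≫ (ρ_ _).hom ≫ q.evaluation' := by
  have key : (β_ f x).inv = (β_ x f).hom := by
    exact (Iso.inv_ext (hf x))
  let := p
  let := q
  change η_ (f ⊗ x) (xd ⊗ fd) ≫ (β_ (f ⊗ x) (xd ⊗ fd)).hom ≫ ε_ (f ⊗ x) (xd ⊗ fd) =
    η_ x xd ≫ (β_ x xd).hom ≫ (ρ_ _).inv ≫
      (xd ⊗ x) ◁ (η_ f fd ≫ (β_ f fd).hom ≫ ε_ f fd) ≫ (ρ_ _).hom ≫ ε_ x xd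
  rw [ExactPairing.tensor_coevaluation, ExactPairing.tensor_evaluation]
  calc
    _ = η_ f fd ⊗≫ f ◁ (η_ x xd ≫ (β_ x xd).hom) ▷ fd ⊗≫ (β_ f xd).hom ▷ x ▷ fd ⊗≫
          xd ◁ f ◁ (β_ x fd).hom ⊗≫ xd ◁ (β_ f fd).hom ▷ x ⊗≫ xd ◁ (ε_ f fd) ▷ x ⊗≫
          ε_ x xd := by
        rw [BraidedCategory.braiding_tensor_right_hom, BraidedCategory.braiding_tensor_left_hom,
          BraidedCategory.braiding_tensor_left_hom]
        monoidal
    _ = η_ f fd ⊗≫ f ◁ (η_ x xd ≫ (β_ x xd).hom) ▷ fd ⊗≫ (β_ f xd).hom ▷ x ▷ fd ⊗≫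
          xd ◁ ((β_ f x).hom ≫ (β_ f x).inv) ▷ fd ⊗≫
          xd ◁ f ◁ (β_ x fd).hom ⊗≫ xd ◁ (β_ f fd).hom ▷ x ⊗≫ xd ◁ (ε_ f fd) ▷ x ⊗≫
          ε_ x xd := by
        rw [Iso.hom_inv_id]
        monoidal
    _ = η_ f fd ⊗≫ (f ◁ (η_ x xd ≫ (β_ x xd).hom) ≫ (β_ f (xd ⊗ x)).hom) ▷ fd ⊗≫
          xd ◁ ((β_ x (f ⊗ fd)).hom ≫ ((β_ f fd).hom ≫ ε_ f fd) ▷ x) ⊗≫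
          ε_ x xd := by
        rw [key, BraidedCategory.braiding_tensor_right_hom,
          BraidedCategory.braiding_tensor_right_hom]
        monoidal
    _ = 𝟙 _ ⊗≫ (𝟙_ C ◁ η_ f fd ≫ (η_ x xd ≫ (β_ x xd).hom) ▷ (f ⊗ fd)) ⊗≫
          xd ◁ x ◁ ((β_ f fd).hom ≫ ε_ f fd) ⊗≫ ε_ x xd := by
        rw [BraidedCategory.braiding_naturality_right f,
          ← BraidedCategory.braiding_naturality_right x,
          braiding_tensorUnit_right, braiding_tensorUnit_right]
        monoidal
    _ = _ := by
        rw [whisker_exchange]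
        monoidal

theorem eta_eq_zero_of_fermion_fixed
    (k : Type*) [Field k] (hk : ringChar k ≠ 2)
    {C : Type u} [Category.{v} C] [MonoidalCategory C] [BraidedCategory C]
    [Preadditive C] [Linear k C] [MonoidalPreadditive C] [MonoidalLinear k C]
    (f fd x xd : C) (p : ExactPairing f fd) (q : ExactPairing x xd)
    (hf : Transparent f)
    (hetaf : eta f fd p.coevaluation' p.evaluation' = -𝟙 (𝟙_ C))
    (hfx : Nonempty (f ⊗ x ≅ x)) :
    eta x xd q.coevaluation' q.evaluation' = 0 := by
  obtain ⟨e⟩ := hfx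
  have h1 := eta_tensor_aux p q hf
  rw [eta_iso_aux _ q e, hetaf] at h1
  have h2 : eta x xd q.coevaluation' q.evaluation' =
      - eta x xd q.coevaluation' q.evaluation' := by
    conv_lhs => rw [h1]
    have h0 : (xd ⊗ x) ◁ (-𝟙 (𝟙_ C)) = -𝟙 ((xd ⊗ x) ⊗ 𝟙_ C) := by
      rw [← whiskerLeft_id]
      exact (tensorLeft (xd ⊗ x)).map_neg
    rw [h0]
    simp [eta]
  have h3 : (2 : k) • eta x xd q.coevaluation' q.evaluation' = 0 := by
    rw [two_smul]
    nth_rewrite 1 [h2]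
    simp
  exact (smul_eq_zero_iff_right (Ring.two_ne_zero hk)).1 h3
end
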